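/- arXiv:2603.16470 — 2 statements merged into one kernel-verified Lean document; each statement's English description precedes it below -/
import Mathlib

section
/- Let π and π̃ be two policies of a finite Markov decision process with the same transition kernel and initial distribution, and let α = D_TV^max(π, π̃). Then for every time step t ≥ 0, the total variation distance between the time-t state distributions satisfies D_TV(μ_t^{π̃} ‖ μ_t^π) ≤ t·α. -/
open Finset

noncomputable section

/-- Action-value function `Q^π(s,a) = r(s,a) + γ ∑_{s'} P(s'|s,a) V(s')`
(built from a given value function `V`). -/
def mdpQ {S A : Type*} [Fintype S] (P : S → A → S → ℝ) (r : S → A → ℝ) (γ : ℝ)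
    (V : S → ℝ) (s : S) (a : A) : ℝ :=
  r s a + γ * ∑ s', P s a s' * V s'

/-- Advantage function `A^π(s,a) = Q^π(s,a) − V^π(s)`. -/
def mdpAdv {S A : Type*} [Fintype S] (P : S → A → S → ℝ) (r : S → A → ℝ) (γ : ℝ)
    (V : S → ℝ) (s : S) (a : A) : ℝ :=
  mdpQ P r γ V s a - V s

/-- `V` solves the Bellman equation for policy `π`. -/
def IsBellman {S A : Type*} [Fintype S] [Fintype A] (P : S → A → S → ℝ)
    (r : S → A → ℝ) (γ : ℝ) (π : S → A → ℝ) (V : S → ℝ) : Prop :=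
  ∀ s, V s = ∑ a, π s a * (r s a + γ * ∑ s', P s a s' * V s')

/-- Policy performance `η(π) = ∑_s ρ₀(s) V^π(s)`. -/
def perf {S : Type*} [Fintype S] (ρ₀ V : S → ℝ) : ℝ := ∑ s, ρ₀ s * V s

/-- Time-`t` state distribution `μ_t^π`. -/
def stateDist {S A : Type*} [Fintype S] [Fintype A] (P : S → A → S → ℝ)
    (π : S → A → ℝ) (ρ₀ : S → ℝ) : ℕ → S → ℝ
  | 0 => ρ₀
  | t + 1 => fun s' => ∑ s, ∑ a, stateDist P π ρ₀ t s * π s a * P s a s'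

/-- Discounted state visitation frequency `ρ_π(s) = (1−γ) ∑_t γ^t μ_t^π(s)`. -/
def visitFreq {S A : Type*} [Fintype S] [Fintype A] (P : S → A → S → ℝ)
    (π : S → A → ℝ) (ρ₀ : S → ℝ) (γ : ℝ) (s : S) : ℝ :=
  (1 - γ) * ∑' t : ℕ, γ ^ t * stateDist P π ρ₀ t s

/-- Surrogate objective `L_π(π̃)`, built from the value function `V` of `π`. -/
def surrogate {S A : Type*} [Fintype S] [Fintype A] (P : S → A → S → ℝ)
    (r : S → A → ℝ) (γ : ℝ) (ρ₀ : S → ℝ) (π : S → A → ℝ) (V : S → ℝ)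
    (π' : S → A → ℝ) : ℝ :=
  perf ρ₀ V +
    (1 / (1 - γ)) * ∑ s, visitFreq P π ρ₀ γ s * ∑ a, π' s a * mdpAdv P r γ V s a

/-- Total variation distance between pmfs on a finite set. -/
def dTV {X : Type*} [Fintype X] (p q : X → ℝ) : ℝ := (1 / 2) * ∑ x, |p x - q x|

/-- `D_TV^max(π,π̃) = max_s D_TV(π(·|s) ‖ π̃(·|s))`. -/
def dTVmax {S A : Type*} [Fintype S] [Fintype A] (π π' : S → A → ℝ) : ℝ :=
  ⨆ s : S, dTV (π s) (π' s)

/-!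
One time step of the chain driven by `π` is `μ ↦ μ ᵥ* K_π`, where row `s` of the kernel `K_π` is
`π s ᵥ* P s`. Pushing forward through a kernel whose rows have `ℓ¹` norm at most `1` does not
increase `ℓ¹` norms. Hence replacing `π` by `π̃` moves each row of the kernel by at most
`α = D_TV^max(π, π̃)`, and inserting the intermediate distribution `μ_t^π̃ ᵥ* K_π` shows that every
step adds at most `α` to the distance.
-/

open scoped Matrix

theorem sum_abs_vecMul_le {X Y R : Type*} [Fintype X] [Fintype Y] [Ring R] [LinearOrder R]
    [IsOrderedRing R] (p : X → R) (K : Matrix X Y R) :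
    ∑ y, |(p ᵥ* K) y| ≤ ∑ x, |p x| * ∑ y, |K x y| :=
  calc ∑ y, |∑ x, p x * K x y|
      ≤ ∑ y, ∑ x, |p x * K x y| := sum_le_sum fun _ _ => abs_sum_le_sum_abs _ _
    _ = ∑ x, |p x| * ∑ y, |K x y| := by
        rw [sum_comm]
        simp only [abs_mul, mul_sum]

theorem sum_abs_vecMul_le_sum_abs {X Y R : Type*} [Fintype X] [Fintype Y] [Ring R]
    [LinearOrder R] [IsOrderedRing R] (p : X → R) {K : Matrix X Y R}
    (hK : ∀ x, ∑ y, |K x y| ≤ 1) : ∑ y, |(p ᵥ* K) y| ≤ ∑ x, |p x| :=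
  (sum_abs_vecMul_le p K).trans <|
    sum_le_sum fun x _ => mul_le_of_le_one_right (abs_nonneg _) (hK x)

section TotalVariation

variable {X Y : Type*} [Fintype X] [Fintype Y]

theorem dTV_self (p : X → ℝ) : dTV p p = 0 := by simp [dTV]

theorem dTV_nonneg (p q : X → ℝ) : 0 ≤ dTV p q := by unfold dTV; positivity

theorem dTV_comm (p q : X → ℝ) : dTV p q = dTV q p := by simp only [dTV, abs_sub_comm]

theorem dTV_triangle (p q r : X → ℝ) : dTV p r ≤ dTV p q + dTV q r := by
  simp only [dTV, ← mul_add, ← sum_add_distrib]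
  gcongr
  exact abs_sub_le _ _ _

theorem dTV_le_dTVmax (K L : X → Y → ℝ) (x : X) : dTV (K x) (L x) ≤ dTVmax K L :=
  le_ciSup (f := fun x => dTV (K x) (L x)) (Set.finite_range _).bddAbove x

theorem dTVmax_nonneg (K L : X → Y → ℝ) : 0 ≤ dTVmax K L :=
  Real.iSup_nonneg fun _ => dTV_nonneg _ _

theorem dTV_vecMul_right_le (p q : X → ℝ) {K : Matrix X Y ℝ} (hK : ∀ x, ∑ y, |K x y| ≤ 1) :
    dTV (p ᵥ* K) (q ᵥ* K) ≤ dTV p q := by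
  have contraction := sum_abs_vecMul_le_sum_abs (p - q) hK
  rw [Matrix.sub_vecMul] at contraction
  exact mul_le_mul_of_nonneg_left contraction (by norm_num)

theorem dTV_vecMul_left_le (p : X → ℝ) (K L : Matrix X Y ℝ) :
    dTV (p ᵥ* K) (p ᵥ* L) ≤ ∑ x, |p x| * dTV (K x) (L x) := by
  have expand := sum_abs_vecMul_le p (K - L)
  rw [Matrix.vecMul_sub] at expand
  simp only [dTV, mul_left_comm _ (1 / 2 : ℝ), ← mul_sum]
  exact mul_le_mul_of_nonneg_left expand (by norm_num)

theorem dTV_vecMul_left_le_dTVmax {p : X → ℝ} (hp : ∑ x, |p x| ≤ 1) (K L : Matrix X Y ℝ) :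
    dTV (p ᵥ* K) (p ᵥ* L) ≤ dTVmax K L :=
  calc dTV (p ᵥ* K) (p ᵥ* L)
      ≤ ∑ x, |p x| * dTV (K x) (L x) := dTV_vecMul_left_le p K L
    _ ≤ ∑ x, |p x| * dTVmax K L := by
        gcongr with x
        exact dTV_le_dTVmax K L x
    _ = (∑ x, |p x|) * dTVmax K L := (sum_mul ..).symm
    _ ≤ dTVmax K L := mul_le_of_le_one_left (dTVmax_nonneg K L) hp

theorem dTV_vecMul_le_add_dTVmax (p : X → ℝ) {q : X → ℝ} {K : Matrix X Y ℝ} (L : Matrix X Y ℝ)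
    (hK : ∀ x, ∑ y, |K x y| ≤ 1) (hq : ∑ x, |q x| ≤ 1) :
    dTV (p ᵥ* K) (q ᵥ* L) ≤ dTV p q + dTVmax K L :=
  (dTV_triangle _ (q ᵥ* K) _).trans <|
    add_le_add (dTV_vecMul_right_le p q hK) (dTV_vecMul_left_le_dTVmax hq K L)

end TotalVariation

section Policy

variable {S A : Type*} [Fintype A]

/-- The state-to-state transition kernel `K_π(s, s') = ∑ a, π(a|s) P(s'|s,a)` of the Markov chain
obtained by following the policy `π`, as a matrix whose rows are indexed by the current state. -/
def policyKernel (P : S → A → S → ℝ) (π : S → A → ℝ) : Matrix S S ℝ :=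
  .of fun s => π s ᵥ* .of (P s)

variable [Fintype S] {P : S → A → S → ℝ}

theorem stateDist_succ (P : S → A → S → ℝ) (π : S → A → ℝ) (ρ₀ : S → ℝ) (t : ℕ) :
    stateDist P π ρ₀ (t + 1) = stateDist P π ρ₀ t ᵥ* policyKernel P π := by
  ext s'
  simp only [stateDist, policyKernel, Matrix.vecMul, dotProduct, Matrix.of_apply, mul_sum,
    mul_assoc]

theorem sum_abs_policyKernel_le_one (hP : ∀ s a, ∑ s', |P s a s'| ≤ 1) {π : S → A → ℝ}
    (hπ : ∀ s, ∑ a, |π s a| ≤ 1) (s : S) : ∑ s', |policyKernel P π s s'| ≤ 1 :=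
  (sum_abs_vecMul_le_sum_abs (π s) (hP s)).trans (hπ s)

theorem dTVmax_policyKernel_le (hP : ∀ s a, ∑ s', |P s a s'| ≤ 1) (π π' : S → A → ℝ) :
    dTVmax (policyKernel P π) (policyKernel P π') ≤ dTVmax π π' :=
  ciSup_mono (Set.finite_range _).bddAbove fun s => dTV_vecMul_right_le (π s) (π' s) (hP s)

theorem sum_abs_stateDist_le (hP : ∀ s a, ∑ s', |P s a s'| ≤ 1) {π : S → A → ℝ}
    (hπ : ∀ s, ∑ a, |π s a| ≤ 1) (ρ₀ : S → ℝ) (t : ℕ) :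
    ∑ s, |stateDist P π ρ₀ t s| ≤ ∑ s, |ρ₀ s| := by
  induction t with
  | zero => rfl
  | succ t ih =>
    rw [stateDist_succ]
    exact (sum_abs_vecMul_le_sum_abs _ (sum_abs_policyKernel_le_one hP hπ)).trans ih

theorem state_distribution_tv_bound_general (hP : ∀ s a, ∑ s', |P s a s'| ≤ 1) {ρ₀ : S → ℝ}
    (hρ : ∑ s, |ρ₀ s| ≤ 1) {π πt : S → A → ℝ} (hπ : ∀ s, ∑ a, |π s a| ≤ 1)
    (hπt : ∀ s, ∑ a, |πt s a| ≤ 1) (t : ℕ) :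
    dTV (stateDist P πt ρ₀ t) (stateDist P π ρ₀ t) ≤ t * dTVmax π πt := by
  rw [dTV_comm]
  induction t with
  | zero => simp [stateDist, dTV_self]
  | succ t ih =>
    have mass_le_one : ∑ s, |stateDist P πt ρ₀ t s| ≤ 1 :=
      (sum_abs_stateDist_le hP hπt ρ₀ t).trans hρ
    calc dTV (stateDist P π ρ₀ (t + 1)) (stateDist P πt ρ₀ (t + 1))
        ≤ dTV (stateDist P π ρ₀ t) (stateDist P πt ρ₀ t)
            + dTVmax (policyKernel P π) (policyKernel P πt) := by
          simp only [stateDist_succ]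
          exact dTV_vecMul_le_add_dTVmax _ _ (sum_abs_policyKernel_le_one hP hπ) mass_le_one
      _ ≤ t * dTVmax π πt + dTVmax π πt := add_le_add ih (dTVmax_policyKernel_le hP π πt)
      _ = (t + 1 : ℕ) * dTVmax π πt := by push_cast; ring

end Policy

/-- for two policies `π` and `π̃` of the same MDP with
`α = D_TV^max(π,π̃)`, the time-`t` state distributions satisfy
`D_TV(μ_t^{π̃} ‖ μ_t^π) ≤ t·α` for every `t ≥ 0`. -/
theorem state_distribution_tv_bound
    {S A : Type*} [Fintype S] [Fintype A] [Nonempty S] [Nonempty A]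
    (P : S → A → S → ℝ) (ρ₀ : S → ℝ)
    (hP0 : ∀ s a s', 0 ≤ P s a s') (hP1 : ∀ s a, ∑ s', P s a s' = 1)
    (hρ0 : ∀ s, 0 ≤ ρ₀ s) (hρ1 : ∑ s, ρ₀ s = 1)
    (π πt : S → A → ℝ)
    (hπ0 : ∀ s a, 0 ≤ π s a) (hπ1 : ∀ s, ∑ a, π s a = 1)
    (hπt0 : ∀ s a, 0 ≤ πt s a) (hπt1 : ∀ s, ∑ a, πt s a = 1)
    (α : ℝ) (hα : α = dTVmax π πt) :
    ∀ t : ℕ, dTV (stateDist P πt ρ₀ t) (stateDist P π ρ₀ t) ≤ t * α := by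
  rw [hα]
  apply state_distribution_tv_bound_general <;> simp only [abs_of_nonneg, *, le_refl, implies_true]
end
end

section
/- Let π and π̃ be two policies of a finite Markov decision process with discount factor γ ∈ [0,1), let ε_max = max_{s,a} |A^π(s,a)|, and let α = D_TV^max(π, π̃). Then the gap between the true performance of π̃ and the surrogate objective built at π satisfies the linear bound |η(π̃) − L_π(π̃)| ≤ 2 ε_max γ α / (1−γ)². -/
open Finset

noncomputable section

/-!
Put `W = V^π̃ - V^π` and let `(P W)(s, a)` be its expectation at the next state. Subtracting
`V^π` from the Bellman equation of `π̃` gives `W = 𝔼_π̃[A^π] + γ 𝔼_π̃[P W]`, while unrolling the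
visitation series by one step gives `𝔼_{ρ_π}[W] = (1 - γ) 𝔼_{ρ₀}[W] + γ 𝔼_{ρ_π} 𝔼_π[P W]`. Averaging
the first identity over `ρ_π` and comparing it with the second yields
`η(π̃) - L_π(π̃) = γ / (1 - γ) · 𝔼_{ρ_π}[∑_a (π̃ - π)(a|s) (P W)(s, a)]`.
The inner sum is at most `2 α ‖W‖_∞`, and the first identity at a maximizer of `|W|` gives
`‖W‖_∞ ≤ ε_max / (1 - γ)`.
-/

section Expectation

variable {ι : Type*} [Fintype ι] {p q f : ι → ℝ} {c : ℝ}

lemma abs_sum_mul_le_sum_abs_mul (hf : ∀ i, |f i| ≤ c) :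
    |∑ i, p i * f i| ≤ (∑ i, |p i|) * c :=
  calc |∑ i, p i * f i| ≤ ∑ i, |p i| * |f i| := by
        simpa only [abs_mul] using abs_sum_le_sum_abs (fun i => p i * f i) univ
    _ ≤ ∑ i, |p i| * c := by gcongr with i; exact hf i
    _ = (∑ i, |p i|) * c := (sum_mul ..).symm

lemma abs_sum_mul_le_of_mem_stdSimplex (hp : p ∈ stdSimplex ℝ ι) (hf : ∀ i, |f i| ≤ c) :
    |∑ i, p i * f i| ≤ c := by
  simpa only [abs_of_nonneg (hp.1 _), hp.2, one_mul] using abs_sum_mul_le_sum_abs_mul (p := p) hf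

lemma abs_sum_sub_mul_le_two_mul_dTV_mul (hf : ∀ i, |f i| ≤ c) :
    |∑ i, (q i - p i) * f i| ≤ 2 * dTV p q * c := by
  have two_mul_dTV : 2 * dTV p q = ∑ i, |q i - p i| := by
    simp only [dTV, abs_sub_comm (p _)]
    ring
  exact two_mul_dTV ▸ abs_sum_mul_le_sum_abs_mul hf

end Expectation

lemma dTV_le_dTVmax_s10 {S A : Type*} [Fintype S] [Fintype A] (π π' : S → A → ℝ) (s : S) :
    dTV (π s) (π' s) ≤ dTVmax π π' :=
  le_ciSup (f := fun s => dTV (π s) (π' s)) (Set.finite_range _).bddAbove s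

/-- The conditional expectation `(s, a) ↦ ∑_{s'} P(s'|s,a) f(s')` of `f` at the next state,
which turns the Bellman equation and the flow of state distributions into statements about
averages over actions. -/
def expectNext {S A : Type*} [Fintype S] (P : S → A → S → ℝ) (f : S → ℝ) (s : S) (a : A) : ℝ :=
  ∑ s', P s a s' * f s'

section MDP

variable {S A : Type*} [Fintype S] {P : S → A → S → ℝ} {r : S → A → ℝ} {γ : ℝ}
  {ρ₀ : S → ℝ} {π π' : S → A → ℝ} {V V' : S → ℝ}

lemma abs_mdpAdv_le_iSup [Finite A] (P : S → A → S → ℝ) (r : S → A → ℝ) (γ : ℝ) (V : S → ℝ)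
    (s : S) (a : A) :
    |mdpAdv P r γ V s a| ≤ ⨆ p : S × A, |mdpAdv P r γ V p.1 p.2| :=
  le_ciSup (f := fun p : S × A => |mdpAdv P r γ V p.1 p.2|) (Set.finite_range _).bddAbove (s, a)

lemma expectNext_sub (P : S → A → S → ℝ) (f g : S → ℝ) (s : S) (a : A) :
    expectNext P (f - g) s a = expectNext P f s a - expectNext P g s a := by
  simp only [expectNext, Pi.sub_apply, mul_sub, sum_sub_distrib]

lemma expectNext_one {s : S} {a : A} (hP : ∑ s', P s a s' = 1) : expectNext P 1 s a = 1 := by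
  simpa only [expectNext, Pi.one_apply, mul_one] using hP

lemma abs_expectNext_le (hP : ∀ s a, P s a ∈ stdSimplex ℝ S) {f : S → ℝ} {c : ℝ}
    (hf : ∀ s, |f s| ≤ c) (s : S) (a : A) : |expectNext P f s a| ≤ c :=
  abs_sum_mul_le_of_mem_stdSimplex (hP s a) hf

lemma perf_sub (ρ₀ V V' : S → ℝ) : perf ρ₀ (V - V') = perf ρ₀ V - perf ρ₀ V' := by
  simp only [perf, Pi.sub_apply, mul_sub, sum_sub_distrib]

variable [Fintype A]

lemma sum_stateDist_succ_mul (P : S → A → S → ℝ) (π : S → A → ℝ) (ρ₀ : S → ℝ) (t : ℕ)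
    (f : S → ℝ) :
    ∑ s, stateDist P π ρ₀ (t + 1) s * f s =
      ∑ s, stateDist P π ρ₀ t s * ∑ a, π s a * expectNext P f s a := by
  simp only [stateDist, expectNext, sum_mul, mul_sum, ← mul_assoc]
  rw [sum_comm]
  exact sum_congr rfl fun s _ => sum_comm

lemma stateDist_mem_stdSimplex (hP : ∀ s a, P s a ∈ stdSimplex ℝ S)
    (hπ : ∀ s, π s ∈ stdSimplex ℝ A) (hρ : ρ₀ ∈ stdSimplex ℝ S) (t : ℕ) :
    stateDist P π ρ₀ t ∈ stdSimplex ℝ S := by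
  induction t with
  | zero => exact hρ
  | succ t ih =>
    refine ⟨fun s' => sum_nonneg fun s _ => sum_nonneg fun a _ =>
      mul_nonneg (mul_nonneg (ih.1 s) ((hπ s).1 a)) ((hP s a).1 s'), ?_⟩
    simpa only [expectNext_one (hP _ _).2, Pi.one_apply, mul_one, (hπ _).2, ih.2] using
      sum_stateDist_succ_mul P π ρ₀ t 1

lemma summable_pow_mul_stateDist (hP : ∀ s a, P s a ∈ stdSimplex ℝ S)
    (hπ : ∀ s, π s ∈ stdSimplex ℝ A) (hρ : ρ₀ ∈ stdSimplex ℝ S) (hγ0 : 0 ≤ γ) (hγ1 : γ < 1)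
    (s : S) : Summable fun t => γ ^ t * stateDist P π ρ₀ t s := by
  have hμ := stateDist_mem_stdSimplex hP hπ hρ
  refine (summable_geometric_of_lt_one hγ0 hγ1).of_nonneg_of_le
    (fun t => mul_nonneg (pow_nonneg hγ0 t) ((hμ t).1 s)) fun t => ?_
  exact mul_le_of_le_one_right (pow_nonneg hγ0 t) (mem_Icc_of_mem_stdSimplex (hμ t) s).2

lemma hasSum_visitFreq_mul (hP : ∀ s a, P s a ∈ stdSimplex ℝ S)
    (hπ : ∀ s, π s ∈ stdSimplex ℝ A) (hρ : ρ₀ ∈ stdSimplex ℝ S) (hγ0 : 0 ≤ γ) (hγ1 : γ < 1)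
    (f : S → ℝ) :
    HasSum (fun t => (1 - γ) * γ ^ t * ∑ s, stateDist P π ρ₀ t s * f s)
      (∑ s, visitFreq P π ρ₀ γ s * f s) := by
  have hsum := hasSum_sum (s := univ) fun s _ =>
    ((summable_pow_mul_stateDist hP hπ hρ hγ0 hγ1 s).hasSum.mul_left (1 - γ)).mul_right (f s)
  simpa only [visitFreq, mul_sum, mul_assoc] using hsum

lemma sum_visitFreq_mul (hP : ∀ s a, P s a ∈ stdSimplex ℝ S)
    (hπ : ∀ s, π s ∈ stdSimplex ℝ A) (hρ : ρ₀ ∈ stdSimplex ℝ S) (hγ0 : 0 ≤ γ) (hγ1 : γ < 1)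
    (f : S → ℝ) :
    ∑ s, visitFreq P π ρ₀ γ s * f s =
      (1 - γ) * perf ρ₀ f +
        γ * ∑ s, visitFreq P π ρ₀ γ s * ∑ a, π s a * expectNext P f s a := by
  have hf := hasSum_visitFreq_mul hP hπ hρ hγ0 hγ1 f
  have hnext :=
    hasSum_visitFreq_mul hP hπ hρ hγ0 hγ1 fun s => ∑ a, π s a * expectNext P f s a
  rw [← hf.tsum_eq, hf.summable.tsum_eq_zero_add, ← (hnext.mul_left γ).tsum_eq]
  congr 1
  · simp only [pow_zero, mul_one, stateDist, perf]
  · refine tsum_congr fun t => ?_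
    rw [sum_stateDist_succ_mul]
    ring

lemma visitFreq_mem_stdSimplex (hP : ∀ s a, P s a ∈ stdSimplex ℝ S)
    (hπ : ∀ s, π s ∈ stdSimplex ℝ A) (hρ : ρ₀ ∈ stdSimplex ℝ S) (hγ0 : 0 ≤ γ) (hγ1 : γ < 1) :
    visitFreq P π ρ₀ γ ∈ stdSimplex ℝ S := by
  refine ⟨fun s => mul_nonneg (sub_nonneg.2 hγ1.le) <| tsum_nonneg fun t =>
    mul_nonneg (pow_nonneg hγ0 t) ((stateDist_mem_stdSimplex hP hπ hρ t).1 s), ?_⟩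
  have hmass := sum_visitFreq_mul hP hπ hρ hγ0 hγ1 1
  simp only [perf, expectNext_one (hP _ _).2, Pi.one_apply, mul_one, (hπ _).2, hρ.2] at hmass
  refine mul_left_cancel₀ (sub_pos.2 hγ1).ne' ?_
  linarith

lemma IsBellman.sub_apply_eq (hV' : IsBellman P r γ π' V') (V : S → ℝ) {s : S}
    (hπ' : ∑ a, π' s a = 1) :
    (V' - V) s =
      ∑ a, π' s a * mdpAdv P r γ V s a + γ * ∑ a, π' s a * expectNext P (V' - V) s a := by
  have hVs : V s = ∑ a, π' s a * V s := by rw [← sum_mul, hπ', one_mul]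
  rw [Pi.sub_apply, hV' s, hVs, mul_sum, ← sum_sub_distrib, ← sum_add_distrib]
  refine sum_congr rfl fun a _ => ?_
  rw [expectNext_sub, mdpAdv, mdpQ, expectNext, expectNext]
  ring

lemma IsBellman.abs_sub_le (hP : ∀ s a, P s a ∈ stdSimplex ℝ S)
    (hπ' : ∀ s, π' s ∈ stdSimplex ℝ A) (hγ0 : 0 ≤ γ) (hγ1 : γ < 1)
    (hV' : IsBellman P r γ π' V') {ε : ℝ} (hε : ∀ s a, |mdpAdv P r γ V s a| ≤ ε) (s : S) :
    |(V' - V) s| ≤ ε / (1 - γ) := by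
  have : Nonempty S := ⟨s⟩
  obtain ⟨m, hm⟩ := Finite.exists_max fun s => |(V' - V) s|
  have hadv : |∑ a, π' m a * mdpAdv P r γ V m a| ≤ ε :=
    abs_sum_mul_le_of_mem_stdSimplex (hπ' m) (hε m)
  have hnext : |∑ a, π' m a * expectNext P (V' - V) m a| ≤ |(V' - V) m| :=
    abs_sum_mul_le_of_mem_stdSimplex (hπ' m) (abs_expectNext_le hP hm m)
  have hself : |(V' - V) m| ≤ ε + γ * |(V' - V) m| :=
    calc |(V' - V) m|
        ≤ |∑ a, π' m a * mdpAdv P r γ V m a| +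
            |γ * ∑ a, π' m a * expectNext P (V' - V) m a| :=
          (congrArg abs (hV'.sub_apply_eq V (hπ' m).2)).trans_le (abs_add_le _ _)
      _ ≤ ε + γ * |(V' - V) m| := by
          rw [abs_mul, abs_of_nonneg hγ0]
          gcongr
  refine (hm s).trans ((le_div_iff₀ (sub_pos.2 hγ1)).2 ?_)
  linarith

lemma perf_sub_surrogate (hP : ∀ s a, P s a ∈ stdSimplex ℝ S)
    (hπ : ∀ s, π s ∈ stdSimplex ℝ A) (hρ : ρ₀ ∈ stdSimplex ℝ S) (hγ0 : 0 ≤ γ) (hγ1 : γ < 1)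
    (hπ' : ∀ s, ∑ a, π' s a = 1) (hV' : IsBellman P r γ π' V') (V : S → ℝ) :
    perf ρ₀ V' - surrogate P r γ ρ₀ π V π' =
      γ / (1 - γ) * ∑ s, visitFreq P π ρ₀ γ s *
        ∑ a, (π' s a - π s a) * expectNext P (V' - V) s a := by
  have hflow := sum_visitFreq_mul hP hπ hρ hγ0 hγ1 (V' - V)
  have hbellman : ∑ s, visitFreq P π ρ₀ γ s * (V' - V) s =
      ∑ s, visitFreq P π ρ₀ γ s * ∑ a, π' s a * mdpAdv P r γ V s a +
        γ * ∑ s, visitFreq P π ρ₀ γ s * ∑ a, π' s a * expectNext P (V' - V) s a := by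
    rw [mul_sum, ← sum_add_distrib]
    refine sum_congr rfl fun s _ => ?_
    rw [hV'.sub_apply_eq V (hπ' s)]
    ring
  have hγ : 1 - γ ≠ 0 := (sub_pos.2 hγ1).ne'
  rw [perf_sub] at hflow
  simp only [surrogate, sub_mul, sum_sub_distrib, mul_sub]
  field_simp
  linarith

end MDP

/-- linear surrogate-gap bound: with `ε_max = max_{s,a} |A^π(s,a)|`
and `α = D_TV^max(π,π̃)`, we have `|η(π̃) − L_π(π̃)| ≤ 2 ε_max γ α / (1−γ)²`. -/
theorem surrogate_gap_linear_bound
    {S A : Type*} [Fintype S] [Fintype A] [Nonempty S] [Nonempty A]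
    (P : S → A → S → ℝ) (r : S → A → ℝ) (γ : ℝ) (ρ₀ : S → ℝ)
    (hP0 : ∀ s a s', 0 ≤ P s a s') (hP1 : ∀ s a, ∑ s', P s a s' = 1)
    (hγ0 : 0 ≤ γ) (hγ1 : γ < 1)
    (hρ0 : ∀ s, 0 ≤ ρ₀ s) (hρ1 : ∑ s, ρ₀ s = 1)
    (π πt : S → A → ℝ)
    (hπ0 : ∀ s a, 0 ≤ π s a) (hπ1 : ∀ s, ∑ a, π s a = 1)
    (hπt0 : ∀ s a, 0 ≤ πt s a) (hπt1 : ∀ s, ∑ a, πt s a = 1)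
    (V Vt : S → ℝ)
    (hV : IsBellman P r γ π V) (hVt : IsBellman P r γ πt Vt)
    (εmax α : ℝ)
    (hε : εmax = ⨆ p : S × A, |mdpAdv P r γ V p.1 p.2|)
    (hα : α = dTVmax π πt) :
    |perf ρ₀ Vt - surrogate P r γ ρ₀ π V πt| ≤
      2 * εmax * γ * α / (1 - γ) ^ 2 := by
  have hP : ∀ s a, P s a ∈ stdSimplex ℝ S := fun s a => ⟨hP0 s a, hP1 s a⟩
  have hπ : ∀ s, π s ∈ stdSimplex ℝ A := fun s => ⟨hπ0 s, hπ1 s⟩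
  have hπt : ∀ s, πt s ∈ stdSimplex ℝ A := fun s => ⟨hπt0 s, hπt1 s⟩
  have hρ : ρ₀ ∈ stdSimplex ℝ S := ⟨hρ0, hρ1⟩
  have h1γ : 0 < 1 - γ := sub_pos.2 hγ1
  have hε0 : 0 ≤ εmax := hε ▸ Real.iSup_nonneg fun _ => abs_nonneg _
  have hnext : ∀ s a, |expectNext P (Vt - V) s a| ≤ εmax / (1 - γ) :=
    abs_expectNext_le hP <|
      hVt.abs_sub_le hP hπt hγ0 hγ1 fun s a => hε ▸ abs_mdpAdv_le_iSup P r γ V s a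
  have hpolicy : ∀ s, |∑ a, (πt s a - π s a) * expectNext P (Vt - V) s a| ≤
      2 * α * (εmax / (1 - γ)) := fun s =>
    (abs_sum_sub_mul_le_two_mul_dTV_mul (hnext s)).trans <| by
      gcongr
      exact hα ▸ dTV_le_dTVmax_s10 π πt s
  calc |perf ρ₀ Vt - surrogate P r γ ρ₀ π V πt|
      = γ / (1 - γ) * |∑ s, visitFreq P π ρ₀ γ s *
          ∑ a, (πt s a - π s a) * expectNext P (Vt - V) s a| := by
        rw [perf_sub_surrogate hP hπ hρ hγ0 hγ1 hπt1 hVt V, abs_mul,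
          abs_of_nonneg (div_nonneg hγ0 h1γ.le)]
    _ ≤ γ / (1 - γ) * (2 * α * (εmax / (1 - γ))) := by
        gcongr
        exact abs_sum_mul_le_of_mem_stdSimplex
          (visitFreq_mem_stdSimplex hP hπ hρ hγ0 hγ1) hpolicy
    _ = 2 * εmax * γ * α / (1 - γ) ^ 2 := by field_simp
end
end
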